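/- Let k, i, j be integers with 1 < i < k and j ≥ 1. Set K = k + 2(j−1) and F = {i+j−1,…,i+2(j−1)} (a block of j consecutive elements). The number of permutations σ of {1,…,K} such that σ(F) = {1,…,j} and σ fixes no prefix of size s for any s ∈ {j,…,i+j−2} ∪ {i+2(j−1),…,K−1} equals j!·c_{k+j−2}^{{i+j−2,…,k+j−3}}. -/

import Mathlib

open Nat Finset

/-- The prefix `{1, …, j}` of `{1, …, n}`. We represent `{1, …, n}` by `Fin n`,
an element `x : Fin n` having label `x.val + 1`; so the prefix of size `j` is the
set of elements with label at most `j`. -/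
def pref (n j : ℕ) : Finset (Fin n) :=
  Finset.univ.filter (fun x => x.val + 1 ≤ j)

/-- The segment `{u, …, v}` inside `{1, …, n}` (labels as above). -/
def seg (n u v : ℕ) : Finset (Fin n) :=
  Finset.univ.filter (fun x => u ≤ x.val + 1 ∧ x.val + 1 ≤ v)

/-- A permutation `σ` of `{1, …, n}` fixes a prefix of size `j` if
`σ({1, …, j}) = {1, …, j}`. -/
def FixesPrefix {n : ℕ} (σ : Equiv.Perm (Fin n)) (j : ℕ) : Prop :=
  (pref n j).image σ = pref n j

/-- `c n`: the number of connected permutations of size `n`, i.e. permutations of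
`{1, …, n}` fixing no prefix of size `j` for any `1 ≤ j ≤ n - 1`. -/
noncomputable def c (n : ℕ) : ℕ :=
  Nat.card {σ : Equiv.Perm (Fin n) // ∀ j, 1 ≤ j → j ≤ n - 1 → ¬ FixesPrefix σ j}

/-- `cS n S`: the number of `S`-connected permutations of size `n`, i.e. permutations of
`{1, …, n}` fixing no prefix of size `j` for any `j ∈ S`. -/
noncomputable def cS (n : ℕ) (S : Finset ℕ) : ℕ :=
  Nat.card {σ : Equiv.Perm (Fin n) // ∀ j ∈ S, ¬ FixesPrefix σ j}

/-! Let `F = {a+1, …, a+j}` be the block sent to `{1, …, j}`. Sliding `F` to the bottom, past the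
`a` positions below it, turns any such `σ` into a permutation preserving `{1, …, j}`, that is, into
a direct sum `α ⊕ τ` with `α` of size `j`; the arbitrary `α` accounts for the factor `j!`. Prefixes
of size at least `a + j` are not affected by the slide, so for `t ≥ a` the permutation `σ` fixes the
prefix of size `j + t` exactly when `τ` fixes the prefix of size `t`, whereas a nonempty prefix of
size at most `a` misses `F` and hence is sent to values above `j`. -/

lemma image_mul_of_image_eq {α : Type*} [DecidableEq α] {σ τ : Equiv.Perm α} {A B : Finset α}
    (h : A.image τ = B) : A.image (σ * τ) = B.image σ := by
  rw [Equiv.Perm.coe_mul, ← Finset.image_image, h]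

section Prefix

variable {n : ℕ}

lemma mem_pref {s : ℕ} {x : Fin n} : x ∈ pref n s ↔ x.val < s := by
  simp only [pref, Finset.mem_filter, Finset.mem_univ, true_and, Nat.succ_le_iff]

lemma mem_seg {u v : ℕ} {x : Fin n} : x ∈ seg n u v ↔ u ≤ x.val + 1 ∧ x.val + 1 ≤ v := by
  simp only [seg, Finset.mem_filter, Finset.mem_univ, true_and]

lemma fixesPrefix_iff_forall_lt (σ : Equiv.Perm (Fin n)) (s : ℕ) :
    FixesPrefix σ s ↔ ∀ x : Fin n, x.val < s → (σ x).val < s := by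
  have image_subset : (pref n s).image σ ⊆ pref n s ↔ ∀ x : Fin n, x.val < s → (σ x).val < s := by
    simp only [Finset.image_subset_iff, mem_pref]
  rw [← image_subset]
  refine ⟨fun h => h.subset, fun h => Finset.eq_of_subset_of_card_le h ?_⟩
  rw [Finset.card_image_of_injective _ σ.injective]

lemma fixesPrefix_zero (σ : Equiv.Perm (Fin n)) : FixesPrefix σ 0 := by
  simp only [fixesPrefix_iff_forall_lt, Nat.not_lt_zero, false_imp_iff, implies_true]

lemma fixesPrefix_mul_iff {σ τ : Equiv.Perm (Fin n)} {s : ℕ} (hτ : FixesPrefix τ s) :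
    FixesPrefix (σ * τ) s ↔ FixesPrefix σ s := by
  rw [FixesPrefix, image_mul_of_image_eq hτ, FixesPrefix]

lemma disjoint_pref_seg {s u : ℕ} (hsu : s < u) (v : ℕ) : Disjoint (pref n s) (seg n u v) := by
  simp only [Finset.disjoint_left, mem_pref, mem_seg]
  omega

lemma not_disjoint_pref {s j : ℕ} (hn : 0 < n) (hs : 0 < s) (hj : 0 < j) :
    ¬ Disjoint (pref n s) (pref n j) :=
  Finset.not_disjoint_iff.2 ⟨⟨0, hn⟩, mem_pref.2 hs, mem_pref.2 hj⟩

lemma not_fixesPrefix_of_image_seg_eq_pref {σ : Equiv.Perm (Fin n)} {s u v j : ℕ} (hn : 0 < n)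
    (hj : 0 < j) (hσ : (seg n u v).image σ = pref n j) (hs : 0 < s) (hsu : s < u) :
    ¬ FixesPrefix σ s := by
  intro h
  have disjoint_images := (Finset.disjoint_image σ.injective).2 (disjoint_pref_seg hsu v)
  rw [h, hσ] at disjoint_images
  exact not_disjoint_pref hn hs hj disjoint_images

end Prefix

section DirectSum

variable {j n : ℕ}

/-- The direct sum `α ⊕ τ`: it acts as `α` on `{1, …, j}` and as the translate of `τ` on
`{j+1, …, j+n}`. -/
def directSum (α : Equiv.Perm (Fin j)) (τ : Equiv.Perm (Fin n)) : Equiv.Perm (Fin (j + n)) :=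
  finSumFinEquiv.permCongr (Equiv.Perm.sumCongr α τ)

lemma directSum_castAdd (α : Equiv.Perm (Fin j)) (τ : Equiv.Perm (Fin n)) (x : Fin j) :
    directSum α τ (Fin.castAdd n x) = Fin.castAdd n (α x) := by
  simp [directSum, Equiv.permCongr_apply]

lemma directSum_natAdd (α : Equiv.Perm (Fin j)) (τ : Equiv.Perm (Fin n)) (x : Fin n) :
    directSum α τ (Fin.natAdd j x) = Fin.natAdd j (τ x) := by
  simp [directSum, Equiv.permCongr_apply]

lemma fixesPrefix_directSum_add (α : Equiv.Perm (Fin j)) (τ : Equiv.Perm (Fin n)) (t : ℕ) :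
    FixesPrefix (directSum α τ) (j + t) ↔ FixesPrefix τ t := by
  have castAdd_lt (x : Fin j) : x.val < j + t := by omega
  simp only [fixesPrefix_iff_forall_lt, Fin.forall_fin_add, directSum_castAdd, directSum_natAdd,
    Fin.val_castAdd, Fin.val_natAdd, castAdd_lt, implies_true, true_and, Nat.add_lt_add_iff_left]

lemma fixesPrefix_directSum (α : Equiv.Perm (Fin j)) (τ : Equiv.Perm (Fin n)) :
    FixesPrefix (directSum α τ) j :=
  (fixesPrefix_directSum_add α τ 0).2 (fixesPrefix_zero τ)

lemma directSum_injective :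
    Function.Injective fun p : Equiv.Perm (Fin j) × Equiv.Perm (Fin n) => directSum p.1 p.2 :=
  finSumFinEquiv.permCongr.injective.comp Equiv.Perm.sumCongrHom_injective

lemma FixesPrefix.exists_directSum_eq {ρ : Equiv.Perm (Fin (j + n))} (hρ : FixesPrefix ρ j) :
    ∃ α τ, directSum α τ = ρ := by
  have mapsTo_inl : Set.MapsTo (finSumFinEquiv.permCongr.symm ρ)
      (Set.range (Sum.inl : Fin j → Fin j ⊕ Fin n)) (Set.range Sum.inl) := by
    rintro _ ⟨x, rfl⟩
    have lt_j := (fixesPrefix_iff_forall_lt ρ j).1 hρ (Fin.castAdd n x) x.isLt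
    refine ⟨⟨_, lt_j⟩, ?_⟩
    simp only [Equiv.permCongr_symm_apply, finSumFinEquiv_apply_left, Equiv.eq_symm_apply]
    rfl
  obtain ⟨⟨α, τ⟩, hατ⟩ := Equiv.Perm.mem_sumCongrHom_range_of_perm_mapsTo_inl mapsTo_inl
  exact ⟨α, τ, (Equiv.eq_symm_apply _).1 hατ⟩

/-- The splitting of the permutations preserving `{1, …, j}` into their two direct summands. -/
noncomputable def directSumEquiv (j n : ℕ) :
    Equiv.Perm (Fin j) × Equiv.Perm (Fin n) ≃ {ρ : Equiv.Perm (Fin (j + n)) // FixesPrefix ρ j} :=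
  Equiv.ofBijective (fun p => ⟨directSum p.1 p.2, fixesPrefix_directSum p.1 p.2⟩)
    ⟨fun _ _ h => directSum_injective (congrArg Subtype.val h), fun ρ =>
      have ⟨α, τ, h⟩ := ρ.2.exists_directSum_eq
      ⟨(α, τ), Subtype.ext h⟩⟩

lemma card_fixesPrefix_and_not_fixesPrefix_add (j n : ℕ) (T : Finset ℕ) :
    Nat.card {ρ : Equiv.Perm (Fin (j + n)) //
      FixesPrefix ρ j ∧ ∀ t ∈ T, ¬ FixesPrefix ρ (j + t)} = j ! * cS n T := by
  calc
    _ = Nat.card {ρ : {ρ : Equiv.Perm (Fin (j + n)) // FixesPrefix ρ j} //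
          ∀ t ∈ T, ¬ FixesPrefix ρ.1 (j + t)} :=
      (Nat.card_congr (Equiv.subtypeSubtypeEquivSubtypeInter _ _)).symm
    _ = Nat.card {p : Equiv.Perm (Fin j) × Equiv.Perm (Fin n) //
          ∀ t ∈ T, ¬ FixesPrefix p.2 t} :=
      (Nat.card_congr ((directSumEquiv j n).subtypeEquiv fun p =>
        forall₂_congr fun t _ => not_congr (fixesPrefix_directSum_add p.1 p.2 t).symm)).symm
    _ = Nat.card ({τ : Equiv.Perm (Fin n) // ∀ t ∈ T, ¬ FixesPrefix τ t} ×
          Equiv.Perm (Fin j)) :=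
      Nat.card_congr (((Equiv.prodComm _ _).subtypeEquiv fun _ => Iff.rfl).trans
        (Equiv.prodSubtypeFstEquivSubtypeProd (p := fun τ => ∀ t ∈ T, ¬ FixesPrefix τ t)))
    _ = j ! * cS n T := by rw [Nat.card_prod, Nat.card_perm, Nat.card_fin, cS, Nat.mul_comm]

end DirectSum

section BlockToBottom

variable {a j n : ℕ}

/-- The permutation of positions that slides the block `{a+1, …, a+j}` down to `{1, …, j}` and lifts
`{1, …, a}` to `{j+1, …, j+a}`, keeping the order inside each of the two. -/
def blockToBottom (j : ℕ) (ha : a ≤ n) : Equiv.Perm (Fin (j + n)) where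
  toFun x := ⟨if x.val < a then x + j else if x.val < a + j then x - a else x, by grind⟩
  invFun y := ⟨if y.val < j then y + a else if y.val < a + j then y - j else y, by grind⟩
  left_inv x := by grind
  right_inv y := by grind

lemma val_blockToBottom (ha : a ≤ n) (x : Fin (j + n)) :
    (blockToBottom j ha x).val =
      if x.val < a then x.val + j else if x.val < a + j then x.val - a else x.val := rfl

lemma val_blockToBottom_symm (ha : a ≤ n) (y : Fin (j + n)) :
    ((blockToBottom j ha).symm y).val =
      if y.val < j then y.val + a else if y.val < a + j then y.val - j else y.val := rfl

lemma image_blockToBottom_seg (ha : a ≤ n) :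
    (seg (j + n) (a + 1) (a + j)).image (blockToBottom j ha) = pref (j + n) j := by
  ext y
  simp only [Finset.mem_image, ← Equiv.eq_symm_apply, exists_eq_right, mem_seg, mem_pref,
    val_blockToBottom_symm]
  grind

lemma fixesPrefix_blockToBottom (ha : a ≤ n) {s : ℕ} (hs : j + a ≤ s) :
    FixesPrefix (blockToBottom j ha) s := by
  rw [fixesPrefix_iff_forall_lt]
  intro x hx
  rw [val_blockToBottom]
  grind

lemma image_mul_blockToBottom_seg_eq_pref_iff (ha : a ≤ n) {ρ : Equiv.Perm (Fin (j + n))} :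
    (seg (j + n) (a + 1) (a + j)).image (ρ * blockToBottom j ha) = pref (j + n) j ↔
      FixesPrefix ρ j := by
  rw [image_mul_of_image_eq (image_blockToBottom_seg ha), FixesPrefix]

end BlockToBottom

theorem count_fan_to_bottom_general {a j n : ℕ} (ha : a ≤ n) (hj : 0 < j) {R T : Finset ℕ}
    (hR : R ⊆ Finset.Icc 1 a) (hT : ∀ t ∈ T, a ≤ t) :
    Nat.card {σ : Equiv.Perm (Fin (j + n)) //
      (seg (j + n) (a + 1) (a + j)).image σ = pref (j + n) j ∧
      ∀ s ∈ R ∪ T.image (j + ·), ¬ FixesPrefix σ s} = j ! * cS n T := by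
  rw [← card_fixesPrefix_and_not_fixesPrefix_add]
  refine (Nat.card_congr ((Equiv.mulRight (blockToBottom j ha)).subtypeEquiv fun ρ => ?_)).symm
  simp only [Equiv.coe_mulRight, image_mul_blockToBottom_seg_eq_pref_iff, Finset.forall_mem_union,
    Finset.forall_mem_image]
  refine and_congr_right fun hρ => ?_
  have avoids_R : ∀ s ∈ R, ¬ FixesPrefix (ρ * blockToBottom j ha) s := fun s hs =>
    have ⟨one_le, le_a⟩ := Finset.mem_Icc.1 (hR hs)
    not_fixesPrefix_of_image_seg_eq_pref (by omega) hj
      ((image_mul_blockToBottom_seg_eq_pref_iff ha).2 hρ) one_le (Nat.lt_succ_of_le le_a)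
  have avoids_T : (∀ t ∈ T, ¬ FixesPrefix ρ (j + t)) ↔
      ∀ t ∈ T, ¬ FixesPrefix (ρ * blockToBottom j ha) (j + t) :=
    forall₂_congr fun t ht => not_congr
      (fixesPrefix_mul_iff (fixesPrefix_blockToBottom ha (Nat.add_le_add_left (hT t ht) j))).symm
  rw [avoids_T, and_iff_right avoids_R]

/-- For `1 < i < k` and `j ≥ 1`, with `K = k + 2(j−1)` and `F = {i+j−1,…,i+2(j−1)}`,
the number of permutations `σ` of `{1,…,K}` such that `σ(F) = {1,…,j}` and `σ` fixes no
prefix of size `s` for any `s ∈ {j,…,i+j−2} ∪ {i+2(j−1),…,K−1}` equals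
`j!·c_{k+j−2}^{{i+j−2,…,k+j−3}}`. -/
theorem count_fan_to_bottom (k i j : ℕ) (h1 : 1 < i) (h2 : i < k) (hj : 1 ≤ j) :
    Nat.card {σ : Equiv.Perm (Fin (k + 2 * (j - 1))) //
      (seg (k + 2 * (j - 1)) (i + j - 1) (i + 2 * (j - 1))).image σ =
        pref (k + 2 * (j - 1)) j ∧
      ∀ s ∈ Finset.Icc j (i + j - 2) ∪
          Finset.Icc (i + 2 * (j - 1)) (k + 2 * (j - 1) - 1), ¬ FixesPrefix σ s}
    = j ! * cS (k + j - 2) (Finset.Icc (i + j - 2) (k + j - 3)) := by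
  have size : k + 2 * (j - 1) = j + (k + j - 2) := by omega
  have last_size : k + 2 * (j - 1) - 1 = j + (k + j - 3) := by omega
  have block_start : i + j - 1 = i + j - 2 + 1 := by omega
  have block_end : i + 2 * (j - 1) = i + j - 2 + j := by omega
  have sizes_above : Finset.Icc (i + j - 2 + j) (j + (k + j - 3)) =
      (Finset.Icc (i + j - 2) (k + j - 3)).image (j + ·) := by
    rw [Finset.image_add_left_Icc, Nat.add_comm j (i + j - 2)]
  rw [last_size, size, block_start, block_end, sizes_above]
  exact count_fan_to_bottom_general (by omega) hj (Finset.Icc_subset_Icc_left hj)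
    fun t ht => (Finset.mem_Icc.1 ht).1
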